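/- Let n ≥ 2 and k ≥ 1, and let T be a bipartite labeled tree with n labeled and k unlabeled vertices. For each labeled vertex j, let P(T,j) be the partition of the set of labeled vertices other than j in which i and i' lie in the same block if and only if they are connected by a path in the graph obtained from T by deleting the vertex j. Let H be the subgroup of Aut(F_n) generated by all inner automorphisms together with the Whitehead generators α_{I,j} for all labeled j and all blocks I ∈ P(T,j). Then there exists a surjective group homomorphism from H onto the free abelian group ℤ^{k−1} whose kernel is exactly the subgroup of inner automorphisms; in other words, the image of H in Aut(F_n) modulo inner automorphisms is free abelian of rank k − 1. -/

import Mathlib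

open scoped Classical in
/-- The Whitehead generator `α_{I,j} ∈ Aut(F_n)` for a set `I ⊆ Fin n`: the
automorphism of `FreeGroup (Fin n)` determined on the basis by
`x i ↦ x j⁻¹ * x i * x j` for `i ∈ I` and `x i ↦ x i` for `i ∉ I`. -/
noncomputable def whitehead (n : ℕ) (I : Set (Fin n)) (j : Fin n) :
    MulAut (FreeGroup (Fin n)) :=
  MonoidHom.toMulEquiv
    (FreeGroup.lift (fun i : Fin n =>
      if i ∈ I then (FreeGroup.of j)⁻¹ * FreeGroup.of i * FreeGroup.of j
      else FreeGroup.of i))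
    (FreeGroup.lift (fun i : Fin n =>
      if i ∈ I then FreeGroup.of j * FreeGroup.of i * (FreeGroup.of j)⁻¹
      else FreeGroup.of i))
    (by
      apply FreeGroup.ext_hom
      intro i
      by_cases hi : i ∈ I <;> by_cases hj : j ∈ I <;>
        simp [hi, hj, FreeGroup.lift_apply_of] <;> group)
    (by
      apply FreeGroup.ext_hom
      intro i
      by_cases hi : i ∈ I <;> by_cases hj : j ∈ I <;>
        simp [hi, hj, FreeGroup.lift_apply_of] <;> group)

/-- The graph obtained from `T` by deleting the labeled vertex `j` (and all
incident edges). -/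
def deleteLabeled {n k : ℕ} (T : SimpleGraph (Fin n ⊕ Fin k)) (j : Fin n) :
    SimpleGraph (Fin n ⊕ Fin k) :=
  SimpleGraph.fromRel (fun a b => T.Adj a b ∧ a ≠ Sum.inl j ∧ b ≠ Sum.inl j)

/-- `I` is a block of the partition `P(T,j)` of the labeled vertices other than `j`:
two labels lie in the same block iff they are connected by a path in the graph
obtained from `T` by deleting the vertex labeled `j`. -/
def IsBlock {n k : ℕ} (T : SimpleGraph (Fin n ⊕ Fin k)) (j : Fin n)
    (I : Set (Fin n)) : Prop :=
  ∃ i₀ : Fin n, i₀ ≠ j ∧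
    I = {i : Fin n | i ≠ j ∧ (deleteLabeled T j).Reachable (Sum.inl i) (Sum.inl i₀)}


/-- Integral Heisenberg group. -/
@[ext] structure Heis where
  a : ℤ
  b : ℤ
  c : ℤ

namespace Heis

instance : Mul Heis := ⟨fun x y => ⟨x.a + y.a, x.b + y.b, x.c + y.c + x.a * y.b⟩⟩
instance : One Heis := ⟨⟨0, 0, 0⟩⟩
instance : Inv Heis := ⟨fun x => ⟨-x.a, -x.b, -x.c + x.a * x.b⟩⟩

@[simp] theorem mul_a (x y : Heis) : (x * y).a = x.a + y.a := rfl
@[simp] theorem mul_b (x y : Heis) : (x * y).b = x.b + y.b := rfl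
@[simp] theorem mul_c (x y : Heis) : (x * y).c = x.c + y.c + x.a * y.b := rfl
@[simp] theorem one_a : (1 : Heis).a = 0 := rfl
@[simp] theorem one_b : (1 : Heis).b = 0 := rfl
@[simp] theorem one_c : (1 : Heis).c = 0 := rfl
@[simp] theorem inv_a (x : Heis) : (x⁻¹).a = -x.a := rfl
@[simp] theorem inv_b (x : Heis) : (x⁻¹).b = -x.b := rfl
@[simp] theorem inv_c (x : Heis) : (x⁻¹).c = -x.c + x.a * x.b := rfl

instance : Group Heis :=
  Group.ofLeftAxioms
    (by intro x y z; ext <;> simp <;> ring)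
    (by intro x; ext <;> simp)
    (by intro x; ext <;> simp)

/-- The second coordinate as a homomorphism. -/
def bHom : Heis →* Multiplicative ℤ where
  toFun x := Multiplicative.ofAdd x.b
  map_one' := rfl
  map_mul' _ _ := rfl

end Heis

/-- Exponent sum of `x_j`. -/
def cnt {n : ℕ} (j : Fin n) : FreeGroup (Fin n) →* Multiplicative ℤ :=
  FreeGroup.lift (fun t => if t = j then Multiplicative.ofAdd 1 else 1)

/-- The map to the Heisenberg group. -/
def heis {n : ℕ} (i j : Fin n) : FreeGroup (Fin n) →* Heis :=
  FreeGroup.lift (fun t => if t = i then ⟨1, 0, 0⟩ else if t = j then ⟨0, 1, 0⟩ else 1)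

theorem heis_b {n : ℕ} {i j : Fin n} (hij : i ≠ j) (g : FreeGroup (Fin n)) :
    (heis i j g).b = Multiplicative.toAdd (cnt j g) := by
  have : Heis.bHom.comp (heis i j) = cnt j := by
    apply FreeGroup.ext_hom
    intro t
    by_cases h1 : t = i
    · subst h1
      simp [heis, cnt, Heis.bHom, hij]
    · by_cases h2 : t = j
      · subst h2
        simp [heis, cnt, Heis.bHom, h1]
      · simp [heis, cnt, Heis.bHom, h1, h2]
  have h2 := DFunLike.congr_fun this g
  rw [← h2]; rfl

/-- The exponent invariant. -/
def expo {n : ℕ} (i j : Fin n) (φ : MulAut (FreeGroup (Fin n))) : ℤ :=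
  (heis i j (φ (FreeGroup.of i))).c

/-- pure symmetric automorphisms -/
def IsPS {n : ℕ} (φ : MulAut (FreeGroup (Fin n))) : Prop :=
  ∀ i, ∃ g : FreeGroup (Fin n), φ (FreeGroup.of i) = g⁻¹ * FreeGroup.of i * g

theorem expo_eq {n : ℕ} {i j : Fin n} (hij : i ≠ j) {φ : MulAut (FreeGroup (Fin n))}
    {g : FreeGroup (Fin n)} (h : φ (FreeGroup.of i) = g⁻¹ * FreeGroup.of i * g) :
    expo i j φ = Multiplicative.toAdd (cnt j g) := by
  rw [expo, h, ← heis_b hij g, map_mul, map_mul, map_inv]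
  have : heis i j (FreeGroup.of i) = ⟨1, 0, 0⟩ := by simp [heis]
  rw [this]
  simp
  ring

theorem cnt_ps {n : ℕ} (j : Fin n) {φ : MulAut (FreeGroup (Fin n))} (h : IsPS φ)
    (g : FreeGroup (Fin n)) : cnt j (φ g) = cnt j g := by
  have : (cnt j).comp φ.toMonoidHom = cnt j := by
    apply FreeGroup.ext_hom
    intro t
    obtain ⟨g, hg⟩ := h t
    simp only [MonoidHom.comp_apply, MulEquiv.toMonoidHom_eq_coe, MonoidHom.coe_coe, hg, map_mul,
      map_inv]
    rw [mul_comm, mul_inv_cancel_left]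
  exact DFunLike.congr_fun this g

theorem expo_mul {n : ℕ} {i j : Fin n} (hij : i ≠ j) {φ ψ : MulAut (FreeGroup (Fin n))}
    (hφ : IsPS φ) (hψ : IsPS ψ) : expo i j (φ * ψ) = expo i j φ + expo i j ψ := by
  obtain ⟨g, hg⟩ := hψ i
  obtain ⟨h, hh⟩ := hφ i
  have : (φ * ψ) (FreeGroup.of i) = (h * φ g)⁻¹ * FreeGroup.of i * (h * φ g) := by
    rw [MulAut.mul_apply, hg, map_mul, map_mul, hh, map_inv]
    group
  rw [expo_eq hij this, expo_eq hij hg, expo_eq hij hh, map_mul, cnt_ps j hφ]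
  rfl

theorem isPS_one {n : ℕ} : IsPS (1 : MulAut (FreeGroup (Fin n))) :=
  fun i => ⟨1, by simp⟩

theorem IsPS.mul {n : ℕ} {φ ψ : MulAut (FreeGroup (Fin n))}
    (hφ : IsPS φ) (hψ : IsPS ψ) : IsPS (φ * ψ) := by
  intro i
  obtain ⟨g, hg⟩ := hψ i
  obtain ⟨h, hh⟩ := hφ i
  refine ⟨h * φ g, ?_⟩
  rw [MulAut.mul_apply, hg, map_mul, map_mul, hh, map_inv]
  group

theorem IsPS.inv {n : ℕ} {φ : MulAut (FreeGroup (Fin n))}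
    (hφ : IsPS φ) : IsPS φ⁻¹ := by
  intro i
  obtain ⟨h, hh⟩ := hφ i
  refine ⟨(φ⁻¹ h)⁻¹, ?_⟩
  have h2 := congrArg (fun y => φ⁻¹ y) hh
  simp only [MulAut.inv_apply_self, map_mul, map_inv] at h2
  conv_rhs => rw [h2]
  group

theorem isPS_conj {n : ℕ} (g : FreeGroup (Fin n)) : IsPS (MulAut.conj g) := by
  intro i
  exact ⟨g⁻¹, by simp⟩

theorem whitehead_mem {n : ℕ} {I : Set (Fin n)} {j i : Fin n} (h : i ∈ I) :
    whitehead n I j (FreeGroup.of i) = (FreeGroup.of j)⁻¹ * FreeGroup.of i * FreeGroup.of j := by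
  simp [whitehead, h]

theorem whitehead_not_mem {n : ℕ} {I : Set (Fin n)} {j i : Fin n} (h : i ∉ I) :
    whitehead n I j (FreeGroup.of i) = FreeGroup.of i := by
  simp [whitehead, h]

theorem isPS_whitehead {n : ℕ} (I : Set (Fin n)) (j : Fin n) : IsPS (whitehead n I j) := by
  intro i
  by_cases h : i ∈ I
  · exact ⟨_, whitehead_mem h⟩
  · exact ⟨1, by simp [whitehead_not_mem h]⟩

theorem expo_conj {n : ℕ} {i j : Fin n} (hij : i ≠ j) (g : FreeGroup (Fin n)) :
    expo i j (MulAut.conj g) = Multiplicative.toAdd (cnt j g⁻¹) :=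
  expo_eq hij (by simp)

theorem expo_whitehead_mem {n : ℕ} {i j : Fin n} (hij : i ≠ j) {I : Set (Fin n)} (h : i ∈ I) :
    expo i j (whitehead n I j) = 1 := by
  rw [expo_eq hij (whitehead_mem h)]
  simp [cnt]

theorem expo_whitehead_ne {n : ℕ} {i j j' : Fin n} (hij : i ≠ j) (I : Set (Fin n)) (h : j' ≠ j) :
    expo i j (whitehead n I j') = 0 := by
  by_cases hi : i ∈ I
  · rw [expo_eq hij (whitehead_mem hi)]
    simp [cnt, h]
  · rw [expo_eq hij (g := 1) (by simp [whitehead_not_mem hi])]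
    simp

theorem expo_whitehead_not_mem {n : ℕ} {i j j' : Fin n} (hij : i ≠ j) {I : Set (Fin n)}
    (hi : i ∉ I) : expo i j (whitehead n I j') = 0 := by
  rw [expo_eq hij (g := 1) (by simp [whitehead_not_mem hi])]
  simp

theorem aut_ext {n : ℕ} {φ ψ : MulAut (FreeGroup (Fin n))}
    (h : ∀ i, φ (FreeGroup.of i) = ψ (FreeGroup.of i)) : φ = ψ := by
  have : φ.toMonoidHom = ψ.toMonoidHom := FreeGroup.ext_hom _ _ h
  ext g
  exact DFunLike.congr_fun this g

theorem whitehead_empty {n : ℕ} (j : Fin n) : whitehead n ∅ j = 1 :=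
  aut_ext fun i => by simp [whitehead_not_mem]

theorem whitehead_union {n : ℕ} {I J : Set (Fin n)} {j : Fin n} (hI : j ∉ I)
    (hd : Disjoint I J) : whitehead n (I ∪ J) j = whitehead n I j * whitehead n J j := by
  apply aut_ext
  intro i
  rw [MulAut.mul_apply]
  by_cases h1 : i ∈ I
  · have h2 : i ∉ J := Set.disjoint_left.1 hd h1
    rw [whitehead_mem (Or.inl h1), whitehead_not_mem h2, whitehead_mem h1]
  · by_cases h2 : i ∈ J
    · rw [whitehead_mem (Or.inr h2), whitehead_mem h2]
      simp [whitehead_not_mem hI, whitehead_not_mem h1]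
    · rw [whitehead_not_mem (by simp [h1, h2]), whitehead_not_mem h2, whitehead_not_mem h1]

theorem whitehead_compl {n : ℕ} (j : Fin n) :
    whitehead n {i | i ≠ j} j = MulAut.conj (FreeGroup.of j)⁻¹ := by
  apply aut_ext
  intro i
  by_cases h : i = j
  · subst h
    rw [whitehead_not_mem (by simp)]; simp
  · rw [whitehead_mem h]; simp

theorem comm_disj {n : ℕ} {I J : Set (Fin n)} {j l : Fin n} (hl : l ∉ I) (hj : j ∉ J)
    (hd : Disjoint I J) : Commute (whitehead n I j) (whitehead n J l) := by
  apply aut_ext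
  intro i
  rw [MulAut.mul_apply, MulAut.mul_apply]
  by_cases h1 : i ∈ I
  · have h2 : i ∉ J := Set.disjoint_left.1 hd h1
    simp [whitehead_mem h1, whitehead_not_mem h2, whitehead_not_mem hj]
  · by_cases h2 : i ∈ J
    · simp [whitehead_mem h2, whitehead_not_mem h1, whitehead_not_mem hl]
    · simp [whitehead_not_mem h2, whitehead_not_mem h1]

theorem comm_sub {n : ℕ} {I J : Set (Fin n)} {j l : Fin n} (hl : l ∉ I) (hj : j ∈ J)
    (hd : I ⊆ J) : Commute (whitehead n I j) (whitehead n J l) := by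
  apply aut_ext
  intro i
  rw [MulAut.mul_apply, MulAut.mul_apply]
  by_cases h1 : i ∈ I
  · have h2 : i ∈ J := hd h1
    simp [whitehead_mem h1, whitehead_mem h2, whitehead_mem hj, whitehead_not_mem hl]
    group
  · by_cases h2 : i ∈ J
    · simp [whitehead_mem h2, whitehead_not_mem h1, whitehead_not_mem hl]
    · simp [whitehead_not_mem h2, whitehead_not_mem h1]

theorem abs_split {G ι : Type*} [Group G] [Fintype ι] [DecidableEq ι] (N H : Subgroup G)
    [N.Normal] (β : ι → G) (hc : ∀ i j, Commute (β i) (β j)) (hβ : ∀ i, β i ∈ H)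
    (hH : H ≤ N ⊔ Subgroup.closure (Set.range β))
    (f : H →* (ι → Multiplicative ℤ)) (hfN : ∀ h : H, (h : G) ∈ N → f h = 1)
    (hfβ : ∀ i, f ⟨β i, hβ i⟩ = Pi.mulSingle i (Multiplicative.ofAdd 1)) :
    Function.Surjective f ∧ ∀ h : H, f h = 1 ↔ (h : G) ∈ N := by
  let A : (ι → Multiplicative ℤ) →* H :=
    MonoidHom.noncommPiCoprod (fun i => zpowersHom H ⟨β i, hβ i⟩) (by
      intro i j _ x y
      simp only [zpowersHom_apply]
      apply Commute.zpow_zpow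
      apply Subtype.ext
      exact hc i j)
  have hA : ∀ i, A (Pi.mulSingle i (Multiplicative.ofAdd 1)) = ⟨β i, hβ i⟩ := by
    intro i
    refine (MonoidHom.noncommPiCoprod_mulSingle (ϕ := fun i => zpowersHom H ⟨β i, hβ i⟩) i _).trans ?_
    simp
  have hfA : f.comp A = MonoidHom.id _ := by
    apply MonoidHom.functions_ext'
    intro i
    apply MonoidHom.ext_mint
    simp only [MonoidHom.comp_apply, MonoidHom.mulSingle_apply, MonoidHom.id_apply]
    rw [hA, hfβ]
  have hfA' : ∀ c, f (A c) = c := fun c => DFunLike.congr_fun hfA c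
  refine ⟨fun c => ⟨A c, hfA' c⟩, fun h => ⟨fun hf => ?_, hfN h⟩⟩
  have hle : Subgroup.closure (Set.range β) ≤ (H.subtype.comp A).range := by
    rw [Subgroup.closure_le]
    rintro _ ⟨i, rfl⟩
    exact ⟨_, congrArg Subtype.val (hA i)⟩
  obtain ⟨y, hy, z, hz, hyz⟩ := Subgroup.mem_sup_of_normal_left.1 (hH h.2)
  obtain ⟨c, rfl⟩ := hle hz
  have hyH : y ∈ H := by
    have : y = (h * (A c)⁻¹ : H) := by
      simp [← hyz]
    rw [this]; exact SetLike.coe_mem _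
  have hh : h = ⟨y, hyH⟩ * A c := Subtype.ext hyz.symm
  have hy1 : f ⟨y, hyH⟩ = 1 := hfN _ hy
  rw [hh, map_mul, hy1, one_mul, hfA'] at hf
  subst hf
  rw [hh]; simpa using hy

section tree
variable {n k : ℕ} {T : SimpleGraph (Fin n ⊕ Fin k)}

/-- Reachability avoiding the label `j`. -/
def RR (T : SimpleGraph (Fin n ⊕ Fin k)) (j : Fin n) (u v : Fin n ⊕ Fin k) : Prop :=
  (deleteLabeled T j).Reachable u v

theorem RR.symm {j : Fin n} {u v} (h : RR T j u v) : RR T j v u := SimpleGraph.Reachable.symm h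
theorem RR.trans {j : Fin n} {u v w} (h : RR T j u v) (h' : RR T j v w) : RR T j u w :=
  SimpleGraph.Reachable.trans h h'
theorem RR.refl {j : Fin n} (u) : RR T j u u := SimpleGraph.Reachable.refl u

theorem RR.adj {j : Fin n} {u v} (h : T.Adj u v) (hu : u ≠ Sum.inl j) (hv : v ≠ Sum.inl j) :
    RR T j u v := by
  apply SimpleGraph.Adj.reachable
  simp only [deleteLabeled, SimpleGraph.fromRel_adj]
  exact ⟨h.ne, Or.inl ⟨h, hu, hv⟩⟩

theorem deleteLabeled_adj {j : Fin n} {u v} (h : (deleteLabeled T j).Adj u v) :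
    T.Adj u v ∧ u ≠ Sum.inl j ∧ v ≠ Sum.inl j := by
  simp only [deleteLabeled, SimpleGraph.fromRel_adj] at h
  obtain ⟨_, h | h⟩ := h
  · exact h
  · exact ⟨h.1.symm, h.2.2, h.2.1⟩

theorem walk_support {j : Fin n} {u v} (p : (deleteLabeled T j).Walk u v)
    (hu : u ≠ Sum.inl j) :
    ∃ q : T.Walk u v, Sum.inl j ∉ q.support := by
  induction p with
  | nil => exact ⟨.nil, by simpa using hu.symm⟩
  | cons h p ih =>
    obtain ⟨q, hq⟩ := ih (deleteLabeled_adj h).2.2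
    exact ⟨.cons (deleteLabeled_adj h).1 q, by simp [hq, hu.symm]⟩

theorem RR.ne {j : Fin n} {u} (h : RR T j u (Sum.inl j)) : u = Sum.inl j := by
  by_contra hu
  obtain ⟨p⟩ := h
  obtain ⟨q, hq⟩ := walk_support p hu
  exact hq q.end_mem_support

/-- The main separation lemma. -/
theorem RR.sep (hT : T.Connected) {a b : Fin n} (hab : a ≠ b) (c) :
    RR T a c (Sum.inl b) ∨ RR T b c (Sum.inl a) := by
  obtain ⟨p⟩ := hT c (Sum.inl a)
  have key : ∀ (u v : Fin n ⊕ Fin k), T.Walk u v → v = Sum.inl a →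
      RR T a u (Sum.inl b) ∨ RR T b u (Sum.inl a) := by
    intro u v p
    induction p with
    | nil => intro h; subst h; exact Or.inr (RR.refl _)
    | @cons u d v h p ih =>
      intro hv
      by_cases hub : u = Sum.inl b
      · subst hub; exact Or.inl (RR.refl _)
      by_cases hua : u = Sum.inl a
      · subst hua; exact Or.inr (RR.refl _)
      by_cases hda : d = Sum.inl a
      · right
        have := RR.adj (T := T) (j := b) h hub (by rw [hda]; simpa using hab)
        rwa [hda] at this
      by_cases hdb : d = Sum.inl b
      · left
        have := RR.adj (T := T) (j := a) h hua (by rw [hdb]; simpa using hab.symm)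
        rwa [hdb] at this
      rcases ih hv with h1 | h1
      · exact Or.inl ((RR.adj h hua hda).trans h1)
      · exact Or.inr ((RR.adj h hub hdb).trans h1)
  exact key _ _ p rfl

theorem not_RR_of_path (hT : T.IsTree) {j : Fin n} {u v} (p : T.Walk u v) (hp : p.IsPath)
    (hj : Sum.inl j ∈ p.support) (hu : u ≠ Sum.inl j) : ¬ RR T j u v := by
  classical
  rintro ⟨q⟩
  obtain ⟨q, hq⟩ := walk_support q hu
  have h1 := (hT.existsUnique_path u v).unique hp q.bypass_isPath
  rw [h1] at hj
  exact hq (q.support_bypass_subset_support hj)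

theorem exists_parent (hT : T.IsTree) (hbipR : ∀ w w' : Fin k, ¬ T.Adj (Sum.inr w) (Sum.inr w'))
    {w w0 : Fin k} (h : w ≠ w0) :
    ∃ p : Fin n, T.Adj (Sum.inr w) (Sum.inl p) ∧ ¬ RR T p (Sum.inr w) (Sum.inr w0) := by
  obtain ⟨q, hq, -⟩ := hT.existsUnique_path (Sum.inr w) (Sum.inr w0)
  have key : ∀ (u v : Fin n ⊕ Fin k) (q : T.Walk u v), q.IsPath → u = Sum.inr w → v = Sum.inr w0 →
    ∃ p : Fin n, T.Adj u (Sum.inl p) ∧ ¬ RR T p u v := by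
    intro u v q hq hu hv
    cases q with
    | nil => exact absurd (hu.symm.trans hv) (by simpa using h)
    | @cons _ d _ hd q =>
      rcases d with p | w'
      · refine ⟨p, hd, not_RR_of_path hT _ hq (by simp) (by rw [hu]; simp)⟩
      · rw [hu] at hd; exact absurd hd (hbipR _ _)
  exact key _ _ q hq rfl rfl

theorem unique_nbr (hT : T.IsTree) {p : Fin n} {w w' : Fin k}
    (h : T.Adj (Sum.inr w) (Sum.inl p)) (h' : T.Adj (Sum.inr w') (Sum.inl p))
    (hR : RR T p (Sum.inr w) (Sum.inr w')) : w = w' := by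
  by_contra hne
  refine not_RR_of_path hT (.cons h (.cons h'.symm .nil)) ?_ (by simp) (by simp) hR
  simp [SimpleGraph.Walk.isPath_def, hne]

theorem exists_nbr (hT : T.Connected) (hbipL : ∀ i i' : Fin n, ¬ T.Adj (Sum.inl i) (Sum.inl i'))
    {j i : Fin n} (h : i ≠ j) :
    ∃ w : Fin k, T.Adj (Sum.inr w) (Sum.inl j) ∧ RR T j (Sum.inl i) (Sum.inr w) := by
  obtain ⟨p⟩ := hT (Sum.inl i) (Sum.inl j)
  have key : ∀ (u v : Fin n ⊕ Fin k), T.Walk u v → v = Sum.inl j → u ≠ Sum.inl j →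
      ∃ w : Fin k, T.Adj (Sum.inr w) (Sum.inl j) ∧ RR T j u (Sum.inr w) := by
    intro u v p
    induction p with
    | nil => intro h h'; exact absurd h h'
    | @cons u d v hd p ih =>
      intro hv hu
      by_cases hdj : d = Sum.inl j
      · subst hdj
        rcases u with i | w
        · exact absurd hd (hbipL _ _)
        · exact ⟨w, hd, RR.refl _⟩
      · obtain ⟨w, hw, hR⟩ := ih hv hdj
        exact ⟨w, hw, (RR.adj hd hu hdj).trans hR⟩
  exact key _ _ p rfl (by simpa using h)

theorem parent_unique (hT : T.Connected) {p j : Fin n} {w w0 : Fin k}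
    (hp : T.Adj (Sum.inr w) (Sum.inl p)) (hj : T.Adj (Sum.inr w) (Sum.inl j))
    (hp' : ¬ RR T p (Sum.inr w) (Sum.inr w0)) (hj' : ¬ RR T j (Sum.inr w) (Sum.inr w0)) :
    p = j := by
  by_contra hne
  rcases RR.sep hT hne (Sum.inr w0) with h | h
  · exact hp' ((RR.adj hj (by simp) (by simpa using Ne.symm hne)).trans h.symm)
  · exact hj' ((RR.adj hp (by simp) (by simpa using hne)).trans h.symm)

theorem exists_other (hbipR : ∀ w w' : Fin k, ¬ T.Adj (Sum.inr w) (Sum.inr w'))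
    (hdeg : ∀ w : Fin k, 2 ≤ (T.neighborSet (Sum.inr w)).ncard) (w : Fin k) (p : Fin n) :
    ∃ i : Fin n, i ≠ p ∧ RR T p (Sum.inl i) (Sum.inr w) := by
  obtain ⟨a, ha, hne⟩ := Set.exists_ne_of_one_lt_ncard (hdeg w) (Sum.inl p)
  rcases a with i | w'
  · have : i ≠ p := by simpa using hne
    exact ⟨i, this, (RR.adj ha (by simp) hne).symm⟩
  · exact absurd ha (hbipR _ _)

/-- The label set of the component of `T - j` containing `v`. -/
def DD (T : SimpleGraph (Fin n ⊕ Fin k)) (j : Fin n) (w : Fin n ⊕ Fin k) : Set (Fin n) :=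
  {i | i ≠ j ∧ RR T j (Sum.inl i) w}

theorem DD_congr {j : Fin n} {v w} (h : RR T j v w) : DD T j v = DD T j w := by
  ext i
  exact ⟨fun hi => ⟨hi.1, hi.2.trans h⟩, fun hi => ⟨hi.1, hi.2.trans h.symm⟩⟩

theorem self_not_mem_DD (j : Fin n) (w) : j ∉ DD T j w := fun h => h.1 rfl

theorem DD_disj {j : Fin n} {v w} (h : ¬ RR T j v w) : Disjoint (DD T j v) (DD T j w) :=
  Set.disjoint_left.2 fun _ h1 h2 => h (h1.2.symm.trans h2.2)

theorem beta_comm (hT : T.Connected) {p p' : Fin n} {w w' w0 : Fin k}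
    (h : ¬ RR T p (Sum.inr w) (Sum.inr w0)) (h' : ¬ RR T p' (Sum.inr w') (Sum.inr w0)) :
    Commute (whitehead n (DD T p (Sum.inr w)) p) (whitehead n (DD T p' (Sum.inr w')) p') := by
  by_cases hpp : p = p'
  · subst hpp
    by_cases hR : RR T p (Sum.inr w) (Sum.inr w')
    · rw [DD_congr hR]
    · exact comm_disj (self_not_mem_DD _ _) (self_not_mem_DD _ _) (DD_disj hR)
  by_cases h1 : RR T p' (Sum.inl p) (Sum.inr w') <;> by_cases h2 : RR T p (Sum.inl p') (Sum.inr w)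
  · exfalso
    rcases RR.sep hT hpp (Sum.inr w0) with h3 | h3
    · exact h (h3.trans h2).symm
    · exact h' (h3.trans h1).symm
  · refine comm_sub (fun h => h2 h.2) ⟨hpp, h1⟩ ?_
    intro u hu
    rcases RR.sep hT hpp (Sum.inl u) with h3 | h3
    · exact absurd (h3.symm.trans hu.2) h2
    · refine ⟨?_, h3.trans h1⟩
      rintro rfl
      exact h2 hu.2
  · refine Commute.symm (comm_sub (fun h => h1 h.2) ⟨Ne.symm hpp, h2⟩ ?_)
    intro u hu
    rcases RR.sep hT hpp (Sum.inl u) with h3 | h3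
    · refine ⟨?_, h3.trans h2⟩
      rintro rfl
      exact h1 hu.2
    · exact absurd (h3.symm.trans hu.2) h1
  · refine comm_disj (fun h => h2 h.2) (fun h => h1 h.2) ?_
    refine Set.disjoint_left.2 fun u hu hu' => ?_
    rcases RR.sep hT hpp (Sum.inl u) with h3 | h3
    · exact h2 (h3.symm.trans hu.2)
    · exact h1 (h3.symm.trans hu'.2)

end tree

/-- Let `n ≥ 2`, `k ≥ 1`, and let `T` be a bipartite labeled tree
with `n` labeled and `k` unlabeled vertices. Let `H ≤ Aut(F_n)` be generated by all
inner automorphisms together with the Whitehead generators `α_{I,j}` for all labeled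
`j` and all blocks `I ∈ P(T,j)`. Then there is a surjective homomorphism from `H`
onto `ℤ^(k-1)` whose kernel is exactly the subgroup of inner automorphisms. -/
theorem tree_subgroup_mod_inner_free_abelian (n k : ℕ) (hn : 2 ≤ n) (hk : 1 ≤ k)
    (T : SimpleGraph (Fin n ⊕ Fin k))
    (htree : T.IsTree)
    (hbipL : ∀ i i' : Fin n, ¬ T.Adj (Sum.inl i) (Sum.inl i'))
    (hbipR : ∀ w w' : Fin k, ¬ T.Adj (Sum.inr w) (Sum.inr w'))
    (hdeg : ∀ w : Fin k, 2 ≤ (T.neighborSet (Sum.inr w)).ncard) :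
    ∀ H : Subgroup (MulAut (FreeGroup (Fin n))),
      H = Subgroup.closure
        (Set.range (MulAut.conj : FreeGroup (Fin n) →* MulAut (FreeGroup (Fin n)))
          ∪ {φ | ∃ (j : Fin n) (I : Set (Fin n)), IsBlock T j I ∧ φ = whitehead n I j}) →
      ∃ f : H →* Multiplicative (Fin (k - 1) → ℤ),
        Function.Surjective f ∧
        ∀ φ : H, f φ = 1 ↔
          (φ : MulAut (FreeGroup (Fin n)))
            ∈ Set.range (MulAut.conj : FreeGroup (Fin n) →* MulAut (FreeGroup (Fin n))) := by
  classical
  intro H hH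
  let w0 : Fin k := ⟨0, hk⟩
  let ι := {w : Fin k // w ≠ w0}
  have hT := htree.1
  choose p hpadj hpsep using fun w : ι => exists_parent htree hbipR w.2
  choose a ha haR using fun w : ι => exists_other hbipR hdeg w.1 (p w)
  choose b hb hbR using fun w : ι => exists_other hbipR hdeg w0 (p w)
  let β : ι → MulAut (FreeGroup (Fin n)) := fun w => whitehead n (DD T (p w) (Sum.inr w.1)) (p w)
  have hPS : ∀ φ ∈ H, IsPS φ := by
    intro φ hφ
    rw [hH] at hφ
    refine Subgroup.closure_induction ?_ isPS_one (fun _ _ _ _ h h' => h.mul h')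
      (fun _ _ h => h.inv) hφ
    rintro _ (⟨g, rfl⟩ | ⟨j, I, -, rfl⟩)
    · exact isPS_conj g
    · exact isPS_whitehead I j
  have hβ : ∀ w, β w ∈ H := by
    intro w
    rw [hH]
    apply Subgroup.subset_closure
    right
    exact ⟨p w, _, ⟨a w, ha w, DD_congr (haR w).symm⟩, rfl⟩
  let f : H →* (ι → Multiplicative ℤ) := MonoidHom.mk'
    (fun φ w => Multiplicative.ofAdd (expo (a w) (p w) φ.1 - expo (b w) (p w) φ.1)) (by
      intro φ ψ
      funext w
      rw [Pi.mul_apply, ← ofAdd_add]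
      congr 1
      rw [Subgroup.coe_mul, expo_mul (ha w) (hPS _ φ.2) (hPS _ ψ.2),
        expo_mul (hb w) (hPS _ φ.2) (hPS _ ψ.2)]
      ring)
  let N : Subgroup (MulAut (FreeGroup (Fin n))) :=
    (MulAut.conj : FreeGroup (Fin n) →* MulAut (FreeGroup (Fin n))).range
  have hN : N.Normal := by
    constructor
    rintro _ ⟨g, rfl⟩ φ
    refine ⟨φ g, ?_⟩
    ext x
    simp
  have hfN : ∀ h : H, (h : MulAut (FreeGroup (Fin n))) ∈ N → f h = 1 := by
    rintro ⟨h, hh⟩ ⟨g, hg⟩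
    simp only at hg
    subst hg
    funext w
    change Multiplicative.ofAdd (expo (a w) (p w) _ - expo (b w) (p w) _) = 1
    rw [expo_conj (ha w), expo_conj (hb w), sub_self]
    rfl
  have hfβ : ∀ i, f ⟨β i, hβ i⟩ = Pi.mulSingle i (Multiplicative.ofAdd 1) := by
    intro i
    funext w
    change Multiplicative.ofAdd (expo (a w) (p w) (β i) - expo (b w) (p w) (β i)) = _
    by_cases hiw : i = w
    · subst hiw
      have hm : a i ∈ DD T (p i) (Sum.inr i.1) := ⟨ha i, haR i⟩
      rw [Pi.mulSingle_eq_same, expo_whitehead_mem (ha i) hm,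
        expo_whitehead_not_mem (hb i), sub_zero]
      intro h
      exact hpsep i (h.2.symm.trans (hbR i))
    · rw [Pi.mulSingle_eq_of_ne (Ne.symm hiw)]
      by_cases hpp : p i = p w
      · rw [expo_whitehead_not_mem (ha w), expo_whitehead_not_mem (hb w), sub_zero]
        · rfl
        · rintro ⟨-, h⟩
          have h1 := hbR w
          rw [← hpp] at h1
          exact hpsep i (h.symm.trans h1)
        · rintro ⟨-, h⟩
          have h1 := haR w
          have h2 := hpadj w
          rw [← hpp] at h1 h2
          exact hiw (Subtype.ext (unique_nbr htree (hpadj i) h2 (h.symm.trans h1)))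
      · rw [expo_whitehead_ne (ha w) _ hpp, expo_whitehead_ne (hb w) _ hpp, sub_zero]
        rfl
  have hHle : H ≤ N ⊔ Subgroup.closure (Set.range β) := by
    rw [hH, Subgroup.closure_le]
    have hchild : ∀ j i : Fin n, i ≠ j → ¬ RR T j (Sum.inl i) (Sum.inr w0) →
        ∃ w : ι, p w = j ∧ RR T j (Sum.inl i) (Sum.inr w.1) := by
      intro j i hij hR
      obtain ⟨w, hw, hwR⟩ := exists_nbr hT hbipL hij
      have hw0 : w ≠ w0 := by
        rintro rfl
        exact hR hwR
      exact ⟨⟨w, hw0⟩, parent_unique hT (hpadj _) hw (hpsep _) (fun h => hR (hwR.trans h)), hwR⟩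
    rintro _ (⟨g, rfl⟩ | ⟨j, I, ⟨i, hij, hI⟩, rfl⟩)
    · exact Subgroup.mem_sup_left ⟨g, rfl⟩
    · change I = DD T j (Sum.inl i) at hI
      subst hI
      by_cases hR : RR T j (Sum.inl i) (Sum.inr w0)
      · rw [DD_congr hR]
        have hun : ∀ W : Finset ι, (∀ w ∈ W, p w = j) →
            whitehead n (⋃ w ∈ W, DD T j (Sum.inr w.1)) j ∈ Subgroup.closure (Set.range β) := by
          intro W
          induction W using Finset.induction_on with
          | empty => intro _; simp [whitehead_empty]
          | insert w W hw ih =>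
            intro hW
            have ih' := ih (fun v hv => hW v (Finset.mem_insert_of_mem hv))
            have hpw := hW w (Finset.mem_insert_self _ _)
            rw [Finset.set_biUnion_insert]
            by_cases hex : ∃ v ∈ W, RR T j (Sum.inr w.1) (Sum.inr v.1)
            · obtain ⟨v, hv, hvR⟩ := hex
              rw [Set.union_eq_right.2]
              · exact ih'
              · rw [DD_congr hvR]
                exact Set.subset_biUnion_of_mem (u := fun v : ι => DD T j (Sum.inr v.1)) hv
            · push Not at hex
              rw [whitehead_union (self_not_mem_DD _ _)]
              · refine mul_mem (Subgroup.subset_closure ⟨w, ?_⟩) ih'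
                simp only [β, hpw]
              · simp only [Set.disjoint_iUnion_right]
                intro v hv
                exact DD_disj (hex v hv)
        have hJ := hun (Finset.univ.filter (fun w => p w = j)) (by simp)
        set J := ⋃ w ∈ Finset.univ.filter (fun w => p w = j), DD T j (Sum.inr w.1) with hJdef
        have hd : Disjoint (DD T j (Sum.inr w0)) J := by
          simp only [hJdef, Set.disjoint_iUnion_right]
          intro v hv
          apply DD_disj
          intro h
          have hv' : p v = j := by simpa using hv
          apply hpsep v
          rw [hv']
          exact h.symm
        have hU : DD T j (Sum.inr w0) ∪ J = {i | i ≠ j} := by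
          ext u
          constructor
          · rintro (h | h)
            · exact h.1
            · simp only [hJdef, Set.mem_iUnion] at h
              obtain ⟨v, hv, h⟩ := h
              exact h.1
          · intro hu
            by_cases huR : RR T j (Sum.inl u) (Sum.inr w0)
            · exact Or.inl ⟨hu, huR⟩
            · right
              obtain ⟨w, hw, hwR⟩ := hchild j u hu huR
              simp only [hJdef, Set.mem_iUnion]
              exact ⟨w, by simpa using hw, hu, hwR⟩
        have hprod := whitehead_union (self_not_mem_DD _ _) hd
        rw [hU, whitehead_compl] at hprod
        rw [← eq_mul_inv_iff_mul_eq.2 hprod.symm |>.symm]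
        exact Subgroup.mul_mem_sup ⟨_, rfl⟩ (inv_mem hJ)
      · obtain ⟨w, hw, hwR⟩ := hchild j i hij hR
        apply Subgroup.mem_sup_right
        apply Subgroup.subset_closure
        refine ⟨w, ?_⟩
        simp only [β, hw]
        rw [DD_congr hwR]
  obtain ⟨hsurj, hker⟩ := abs_split N H β (fun i j => beta_comm hT (hpsep i) (hpsep j)) hβ hHle
    f hfN hfβ
  have hcard : Fintype.card ι = k - 1 := by
    simp [ι, Fintype.card_subtype_compl]
  let e : ι ≃ Fin (k - 1) := Fintype.equivFinOfCardEq hcard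
  let E : (ι → Multiplicative ℤ) ≃* Multiplicative (Fin (k - 1) → ℤ) :=
    { toFun := fun c => Multiplicative.ofAdd (fun i => Multiplicative.toAdd (c (e.symm i)))
      invFun := fun c i => Multiplicative.ofAdd (Multiplicative.toAdd c (e i))
      left_inv := fun c => by funext i; simp
      right_inv := fun c => by
        apply Multiplicative.toAdd.injective
        funext i; simp
      map_mul' := fun c d => rfl }
  refine ⟨E.toMonoidHom.comp f, E.surjective.comp hsurj, fun φ => ?_⟩
  have h1 : (E.toMonoidHom.comp f) φ = 1 ↔ f φ = 1 := by
    change E (f φ) = 1 ↔ _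
    simp
  rw [h1, hker φ]
  rfl
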